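/- Let (R,m) be a Noetherian local ring with infinite residue field k = R/m and let I be an ideal of R. Let x_1,…,x_s,y be a minimal generating set of I, where J=(x_1,…,x_s) is a reduction of I with reduction number r = r_J(I). Assume that x_1,…,x_s is an R-regular sequence and that the initial forms x_1*,…,x_{s-1}* form a gr_I(R)-regular sequence. Then there is a form Y^{r+1} − Σ_i X_i F_i, with F_1,…,F_s ∈ k[X_1,…,X_s,Y] homogeneous of degree r, such that the fiber cone F(I) ≅ k[X_1,…,X_s,Y]/(Y^{r+1} − Σ_i X_i F_i). In particular rt(F(I)) = r_J(I) + 1 = rt(I). -/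

import Mathlib

set_option synthInstance.maxHeartbeats 1000000
set_option maxHeartbeats 1000000

open MvPolynomial

section Defs

variable {R : Type*} [CommRing R]

/-- The presentation of the Rees algebra of the ideal generated by `g`,
sending the `i`-th variable to `(g i) · t` inside `R[t]`. -/
noncomputable def reesPres {m : ℕ} (g : Fin m → R) :
    MvPolynomial (Fin m) R →ₐ[R] Polynomial R :=
  aeval fun i => Polynomial.C (g i) * Polynomial.X

/-- `Q`, the ideal of equations of the Rees algebra w.r.t. the generators `g`. -/
noncomputable def presKer {m : ℕ} (g : Fin m → R) : Ideal (MvPolynomial (Fin m) R) :=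
  RingHom.ker (reesPres g)

/-- `Q⟨d⟩`, the subideal of `Q` generated by the homogeneous equations of degree at most `d`. -/
noncomputable def presKerLe {m : ℕ} (g : Fin m → R) (d : ℕ) : Ideal (MvPolynomial (Fin m) R) :=
  Ideal.span {F | F ∈ presKer g ∧ ∃ k ≤ d, F.IsHomogeneous k}

/-- The ideal `I·R(I)` of the Rees algebra `R(I) = R[It] ⊆ R[t]`. -/
noncomputable def grIdeal (I : Ideal R) : Ideal (reesAlgebra I) :=
  Ideal.span ((algebraMap R (reesAlgebra I)) '' (I : Set R))

/-- The associated graded ring `gr_I(R) = ⊕ₙ Iⁿ/Iⁿ⁺¹`, realized as `R(I)/I·R(I)`. -/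
abbrev GrRing (I : Ideal R) := reesAlgebra I ⧸ grIdeal I

variable [IsLocalRing R]

/-- The ideal of equations of the fiber cone `F(I) = ⊕ₙ Iⁿ/mIⁿ` with respect to the
generators `g`, namely the image of `Q` in `k[X₁,…,Xₘ]`, `k = R/m` the residue field. -/
noncomputable def fiberKer {m : ℕ} (g : Fin m → R) :
    Ideal (MvPolynomial (Fin m) (IsLocalRing.ResidueField R)) :=
  Ideal.map (MvPolynomial.map (IsLocalRing.residue R)) (presKer g)

/-- The subideal of `fiberKer g` generated by its homogeneous elements of degree `≤ d`. -/
noncomputable def fiberKerLe {m : ℕ} (g : Fin m → R) (d : ℕ) :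
    Ideal (MvPolynomial (Fin m) (IsLocalRing.ResidueField R)) :=
  Ideal.span {F | F ∈ fiberKer g ∧ ∃ k ≤ d, F.IsHomogeneous k}

end Defs

/-!
Write `f = Y ^ (r + 1) - ∑ Xᵢ Fᵢ` for the equation of the Rees algebra coming from
`y ^ (r + 1) ∈ J I ^ r`. Division by `f` replaces every form by one of `Y`-degree at most `r`.

Regularity of `x₁, …, xₛ` together with the Valabrega–Valla formula
`(x₁, …, xⱼ) ∩ I ^ (n + 1) = (x₁, …, xⱼ) I ^ n` for `j < s` shows that an equation of degree
`n + 1 > r` and `Y`-degree at most `r` is a combination, with coefficients `X₁, …, Xₛ`, of equations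
of degree `n` and `Y`-degree at most `r`. Hence `f` and the equations of degree at most `r` generate
all equations.

By minimality of `r`, the coefficient of `Y ^ r` in an equation of degree `r` lies in `m`, and
multiplication by `X₁, …, Xₛ` propagates this to all `Y`-degree-`r` coefficients of equations of
`Y`-degree at most `r`. After multiplying by a power of `Y` and dividing by `f`, it follows that
equations of `Y`-degree at most `r` have all their coefficients in `m`, so only `f` survives in
`k[X₁, …, Xₛ, Y]`.
-/

section PrefixSpan

variable {R M : Type*} [CommSemiring R] [AddCommMonoid M] [Module R M] {s : ℕ}

/-- The submodule generated by the first `j` entries of a finite sequence. It serves both for the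
ideals `(x₁, …, xⱼ)` and for the spans of the variables `X₁, …, Xⱼ`. -/
def prefixSpan (R : Type*) {M : Type*} [CommSemiring R] [AddCommMonoid M] [Module R M] {s : ℕ}
    (v : Fin s → M) (j : ℕ) : Submodule R M :=
  Submodule.span R (v '' {i | (i : ℕ) < j})

theorem prefixSpan_zero (v : Fin s → M) : prefixSpan R v 0 = ⊥ := by
  simp [prefixSpan]

theorem prefixSpan_succ (v : Fin s → M) (j : Fin s) :
    prefixSpan R v (j + 1) = prefixSpan R v j ⊔ Submodule.span R {v j} := by
  have h : {i : Fin s | (i : ℕ) < j + 1} = {i : Fin s | (i : ℕ) < j} ∪ {j} := by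
    ext i
    simp only [Set.mem_ofPred_eq, Set.mem_union, Set.mem_singleton_iff, Fin.ext_iff]
    omega
  rw [prefixSpan, h, Set.image_union, Set.image_singleton, Submodule.span_union, prefixSpan]

theorem prefixSpan_length (v : Fin s → M) : prefixSpan R v s = Submodule.span R (Set.range v) := by
  simp [prefixSpan]

theorem prefixSpan_mono (v : Fin s → M) : Monotone (prefixSpan R v) := fun _ _ hjl ↦
  Submodule.span_mono (Set.image_mono fun _ hi ↦ lt_of_lt_of_le hi hjl)

theorem map_prefixSpan {N : Type*} [AddCommMonoid N] [Module R N] (φ : M →ₗ[R] N)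
    (v : Fin s → M) (j : ℕ) :
    (prefixSpan R v j).map φ = prefixSpan R (φ ∘ v) j := by
  rw [prefixSpan, Submodule.map_span, ← Set.image_comp, prefixSpan]

theorem ofList_take_ofFn (x : Fin s → R) (j : ℕ) :
    Ideal.ofList ((List.ofFn x).take j) = prefixSpan R x j := by
  refine congrArg Ideal.span (Set.ext fun a ↦ ?_)
  simp only [List.mem_take_iff_getElem, List.length_ofFn, List.getElem_ofFn, Set.mem_ofPred_eq,
    Set.mem_image]
  constructor
  · rintro ⟨i, hi, rfl⟩
    exact ⟨⟨i, (lt_min_iff.1 hi).2⟩, (lt_min_iff.1 hi).1, rfl⟩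
  · rintro ⟨i, hi, rfl⟩
    exact ⟨i, lt_min hi i.isLt, rfl⟩

theorem exists_eq_sum_of_mem_span_range_mul {A : Type*} [CommSemiring A] [Algebra R A]
    {v : Fin s → A} {N : Submodule R A} {a : A}
    (ha : a ∈ Submodule.span R (Set.range v) * N) :
    ∃ F : Fin s → A, (∀ i, F i ∈ N) ∧ a = ∑ i, v i * F i := by
  rw [Submodule.span_range_eq_iSup, Submodule.iSup_mul, Submodule.mem_iSup_iff_exists_finsupp] at ha
  obtain ⟨h, hmem, rfl⟩ := ha
  choose F hF hFh using fun i ↦ Submodule.mem_span_singleton_mul.1 (hmem i)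
  exact ⟨F, hF, by simp [hFh, Finsupp.sum_fintype]⟩

end PrefixSpan

section RegularSequence

open RingTheory.Sequence

variable {R : Type*} [CommRing R] {s : ℕ}

theorem mem_of_mul_mem_ofList_take {rs : List R} (h : IsWeaklyRegular R rs) {j : ℕ}
    (hj : j < rs.length) {a : R} (ha : rs[j] * a ∈ Ideal.ofList (rs.take j)) :
    a ∈ Ideal.ofList (rs.take j) := by
  have hreg := h.regular_mod_prev j hj
  rw [smul_eq_mul, Ideal.mul_top] at hreg
  exact mem_of_isSMulRegular_quotient_of_smul_mem hreg ha

theorem mem_prefixSpan_of_mul_mem {x : Fin s → R} (h : IsWeaklyRegular R (List.ofFn x))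
    (j : Fin s) {a : R} (ha : x j * a ∈ prefixSpan R x j) : a ∈ prefixSpan R x j := by
  rw [← ofList_take_ofFn] at ha ⊢
  exact mem_of_mul_mem_ofList_take h (by simp) (by simpa using ha)

theorem mem_prefixSpan_sup_of_mul_mem {G : Ideal R} {ξ : Fin s → R} {l : ℕ}
    (h : IsWeaklyRegular (R ⧸ G) ((List.ofFn fun i ↦ Ideal.Quotient.mk G (ξ i)).take l))
    (j : Fin s) (hj : j < l) {a : R} (ha : ξ j * a ∈ prefixSpan R ξ j ⊔ G) :
    a ∈ prefixSpan R ξ j ⊔ G := by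
  have hmap : Ideal.map (Ideal.Quotient.mk G) (prefixSpan R ξ j) =
      prefixSpan (R ⧸ G) (fun i ↦ Ideal.Quotient.mk G (ξ i)) j := by
    rw [prefixSpan, prefixSpan, ← Ideal.span, Ideal.map_span, ← Set.image_comp]
    rfl
  have htake : ((List.ofFn fun i ↦ Ideal.Quotient.mk G (ξ i)).take l).take j =
      (List.ofFn fun i ↦ Ideal.Quotient.mk G (ξ i)).take j := by
    rw [List.take_take, min_eq_left hj.le]
  rw [← Ideal.mem_quotient_iff_mem_sup, hmap, ← ofList_take_ofFn, ← htake] at ha ⊢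
  exact mem_of_mul_mem_ofList_take h (by simpa using hj) (by simpa using ha)

end RegularSequence

section AssociatedGraded

open RingTheory.Sequence

variable {R : Type*} [CommRing R] {I : Ideal R} {s : ℕ} {x : Fin s → R}
  {ξ : Fin s → reesAlgebra I}

theorem coeff_mem_pow_succ_of_mem_grIdeal {p : reesAlgebra I} (hp : p ∈ grIdeal I) (n : ℕ) :
    (p : Polynomial R).coeff n ∈ I ^ (n + 1) := by
  induction hp using Submodule.span_induction generalizing n with
  | mem p hp =>
    obtain ⟨a, ha, rfl⟩ := hp
    change (Polynomial.C a).coeff n ∈ _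
    rw [Polynomial.coeff_C]
    split_ifs with hn
    · simpa [hn] using ha
    · exact zero_mem _
  | zero => simp
  | add p q _ _ hp hq => simpa using add_mem (hp n) (hq n)
  | smul p q _ hq =>
    rw [smul_eq_mul, MulMemClass.coe_mul, Polynomial.coeff_mul]
    refine sum_mem fun ij hij ↦ ?_
    rw [← Finset.HasAntidiagonal.mem_antidiagonal.1 hij, add_assoc, pow_add]
    exact Ideal.mul_mem_mul ((mem_reesAlgebra_iff I _).1 p.2 _) (hq _)

/-- The ideal of all `c : R` with `c tⁿ ∈ 𝔟`, for an ideal `𝔟` of the Rees algebra `R[It]`. -/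
noncomputable def reesComponent (𝔟 : Ideal (reesAlgebra I)) (n : ℕ) : Ideal R :=
  ((𝔟.restrictScalars R).map (reesAlgebra I).val.toLinearMap).comap (Polynomial.monomial n)

theorem mem_reesComponent {𝔟 : Ideal (reesAlgebra I)} {n : ℕ} {c : R} :
    c ∈ reesComponent 𝔟 n ↔ ∃ p ∈ 𝔟, (p : Polynomial R) = Polynomial.monomial n c :=
  Iff.rfl

theorem reesComponent_mono (n : ℕ) :
    Monotone fun 𝔟 : Ideal (reesAlgebra I) ↦ reesComponent 𝔟 n := fun _ _ h ↦
  Submodule.comap_mono (Submodule.map_mono h)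

theorem mul_pow_le_reesComponent {𝔟 : Ideal (reesAlgebra I)} {A : Ideal R} {d n : ℕ}
    (hA : A ≤ reesComponent 𝔟 d) : A * I ^ n ≤ reesComponent 𝔟 (d + n) := by
  refine Ideal.mul_le.2 fun a ha b hb ↦ ?_
  obtain ⟨p, hp, hpa⟩ := mem_reesComponent.1 (hA ha)
  refine ⟨p * ⟨Polynomial.monomial n b, reesAlgebra.monomial_mem.2 hb⟩,
    Ideal.mul_mem_right _ _ hp, ?_⟩
  simp [hpa, Polynomial.monomial_mul_monomial]

theorem pow_succ_le_reesComponent_grIdeal (n : ℕ) :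
    I ^ (n + 1) ≤ reesComponent (grIdeal I) n := by
  have hI : I ≤ reesComponent (grIdeal I) 0 := fun a ha ↦
    ⟨algebraMap R _ a, Ideal.subset_span ⟨a, ha, rfl⟩, rfl⟩
  simpa only [pow_succ', zero_add] using mul_pow_le_reesComponent (n := n) hI

theorem prefixSpan_mul_pow_le_reesComponent
    (hξ : ∀ i, (ξ i : Polynomial R) = Polynomial.C (x i) * Polynomial.X) (j n : ℕ) :
    prefixSpan R x j * I ^ n ≤ reesComponent (prefixSpan (reesAlgebra I) ξ j) (n + 1) := by
  rw [add_comm]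
  refine mul_pow_le_reesComponent (Submodule.span_le.2 ?_)
  rintro _ ⟨i, hi, rfl⟩
  exact ⟨ξ i, Submodule.subset_span ⟨i, hi, rfl⟩, by simp [hξ, Polynomial.C_mul_X_eq_monomial]⟩

theorem coeff_mem_prefixSpan (hξ : ∀ i, (ξ i : Polynomial R) = Polynomial.C (x i) * Polynomial.X)
    {j : ℕ} {p : reesAlgebra I} (hp : p ∈ prefixSpan (reesAlgebra I) ξ j) (n : ℕ) :
    (p : Polynomial R).coeff n ∈ prefixSpan R x j := by
  have hle : prefixSpan (reesAlgebra I) ξ j ≤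
      Ideal.comap (reesAlgebra I).val (Ideal.map Polynomial.C (prefixSpan R x j)) := by
    refine Submodule.span_le.2 ?_
    rintro _ ⟨i, hi, rfl⟩
    have hxi : x i ∈ prefixSpan R x j := Submodule.subset_span ⟨i, hi, rfl⟩
    simpa [hξ] using Ideal.mul_mem_right _ _ (Ideal.mem_map_of_mem Polynomial.C hxi)
  exact Ideal.mem_map_C_iff.1 (hle hp) n

theorem mem_prefixSpan_sup_pow_of_mul_mem
    (hξ : ∀ i, (ξ i : Polynomial R) = Polynomial.C (x i) * Polynomial.X) {l : ℕ}
    (hgr : IsWeaklyRegular (GrRing I)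
      ((List.ofFn fun i ↦ Ideal.Quotient.mk (grIdeal I) (ξ i)).take l))
    (j : Fin s) (hj : j < l) {n : ℕ} {a : R} (ha : a ∈ I ^ n)
    (hxa : x j * a ∈ prefixSpan R x j * I ^ n ⊔ I ^ (n + 2)) :
    a ∈ prefixSpan R x j ⊔ I ^ (n + 1) := by
  let at_n : reesAlgebra I := ⟨Polynomial.monomial n a, reesAlgebra.monomial_mem.2 ha⟩
  have hle : prefixSpan R x j * I ^ n ⊔ I ^ (n + 2) ≤
      reesComponent (prefixSpan (reesAlgebra I) ξ j ⊔ grIdeal I) (n + 1) :=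
    sup_le
      ((prefixSpan_mul_pow_le_reesComponent hξ j n).trans (reesComponent_mono _ le_sup_left))
      ((pow_succ_le_reesComponent_grIdeal (n + 1)).trans (reesComponent_mono _ le_sup_right))
  obtain ⟨q, hq, hqa⟩ := mem_reesComponent.1 (hle hxa)
  have hq_eq : q = ξ j * at_n := Subtype.ext <| by
    simp [hqa, hξ, at_n, Polynomial.C_mul_X_eq_monomial, Polynomial.monomial_mul_monomial,
      add_comm]
  obtain ⟨p, hp, e, he, hpe⟩ :=
    Submodule.mem_sup.1 (mem_prefixSpan_sup_of_mul_mem hgr j hj (hq_eq ▸ hq))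
  have hcoeff : (p : Polynomial R).coeff n + (e : Polynomial R).coeff n = a := by
    rw [← Polynomial.coeff_add, ← AddMemClass.coe_add, hpe, Polynomial.coeff_monomial_same]
  rw [← hcoeff]
  exact Submodule.add_mem_sup (coeff_mem_prefixSpan hξ hp n)
    (coeff_mem_pow_succ_of_mem_grIdeal he n)

theorem prefixSpan_succ_inf_pow_le (hxI : ∀ i, x i ∈ I) (j : Fin s)
    (hgr : ∀ n, ∀ a ∈ I ^ n, x j * a ∈ prefixSpan R x j * I ^ n ⊔ I ^ (n + 2) →
      a ∈ prefixSpan R x j ⊔ I ^ (n + 1))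
    (ih : ∀ n, prefixSpan R x j ⊓ I ^ (n + 1) ≤ prefixSpan R x j * I ^ n) (n : ℕ) :
    prefixSpan R x (j + 1) ⊓ I ^ (n + 1) ≤ prefixSpan R x (j + 1) * I ^ n := by
  rintro z ⟨hzP, hzI⟩
  have hmul {l : ℕ} {a : R} (ha : a ∈ I ^ l) : x j * a ∈ I ^ (l + 1) :=
    pow_succ' I l ▸ Ideal.mul_mem_mul (hxI j) ha
  have improve : ∀ l ≤ n, ∃ a ∈ I ^ l, z - x j * a ∈ prefixSpan R x j := by
    intro l
    induction l with
    | zero =>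
      rw [SetLike.mem_coe, prefixSpan_succ] at hzP
      obtain ⟨p, hp, q, hq, rfl⟩ := Submodule.mem_sup.1 hzP
      obtain ⟨a, rfl⟩ := Ideal.mem_span_singleton'.1 hq
      exact fun _ ↦ ⟨a, by simp, by simpa [mul_comm] using hp⟩
    | succ l ihl =>
      intro hl
      obtain ⟨a, ha, hza⟩ := ihl (by omega)
      have hza_mul : z - x j * a ∈ prefixSpan R x j * I ^ l :=
        ih l ⟨hza, sub_mem (Ideal.pow_le_pow_right (by omega) hzI) (hmul ha)⟩
      have hxa : x j * a ∈ prefixSpan R x j * I ^ l ⊔ I ^ (l + 2) := by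
        rw [show x j * a = -(z - x j * a) + z by ring]
        exact Submodule.add_mem_sup (neg_mem hza_mul) (Ideal.pow_le_pow_right (by omega) hzI)
      obtain ⟨q, hq, a', ha', rfl⟩ := Submodule.mem_sup.1 (hgr l a ha hxa)
      refine ⟨a', ha', ?_⟩
      rw [show z - x j * a' = (z - x j * (q + a')) + x j * q by ring]
      exact add_mem hza (Ideal.mul_mem_left _ _ hq)
  obtain ⟨a, ha, hza⟩ := improve n le_rfl
  have hza_mul := ih n ⟨hza, sub_mem hzI (hmul ha)⟩
  have hxj : x j ∈ prefixSpan R x (j + 1) := Submodule.subset_span ⟨j, by simp, rfl⟩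
  rw [← sub_add_cancel z (x j * a)]
  exact add_mem (Ideal.mul_mono_left (prefixSpan_mono x (Nat.le_succ _)) hza_mul)
    (Ideal.mul_mem_mul hxj ha)

/-- The Valabrega–Valla formula. -/
theorem prefixSpan_inf_pow_le (hxI : ∀ i, x i ∈ I)
    (hξ : ∀ i, (ξ i : Polynomial R) = Polynomial.C (x i) * Polynomial.X) {l : ℕ}
    (hgr : IsWeaklyRegular (GrRing I)
      ((List.ofFn fun i ↦ Ideal.Quotient.mk (grIdeal I) (ξ i)).take l))
    {j : ℕ} (hjs : j ≤ s) (hjl : j ≤ l) (n : ℕ) :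
    prefixSpan R x j ⊓ I ^ (n + 1) ≤ prefixSpan R x j * I ^ n := by
  induction j generalizing n with
  | zero => simp [prefixSpan_zero]
  | succ j ih =>
    exact prefixSpan_succ_inf_pow_le hxI ⟨j, hjs⟩
      (fun n a ↦ mem_prefixSpan_sup_pow_of_mul_mem hξ hgr ⟨j, hjs⟩ hjl)
      (ih (by omega) (by omega)) n

end AssociatedGraded

section BoundedForms

variable {R σ : Type*} [CommRing R] {Y : σ} {b n : ℕ}

/-- The module of forms of degree `n` whose degree in the distinguished variable `Y` is at most
`b`. -/
noncomputable def boundedForms (R : Type*) {σ : Type*} [CommRing R] (Y : σ) (b n : ℕ) :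
    Submodule R (MvPolynomial σ R) :=
  restrictSupport R {d | d.degree = n ∧ d Y ≤ b}

theorem monomial_mem_boundedForms {d : σ →₀ ℕ} (hdeg : d.degree = n) (hY : d Y ≤ b) (c : R) :
    monomial d c ∈ boundedForms R Y b n :=
  (monomial_mem_restrictSupport R).2 (Or.inl ⟨hdeg, hY⟩)

theorem boundedForms_le_iff {N : Submodule R (MvPolynomial σ R)} :
    boundedForms R Y b n ≤ N ↔
      ∀ d : σ →₀ ℕ, d.degree = n → d Y ≤ b → monomial d (1 : R) ∈ N := by
  rw [boundedForms, restrictSupport_eq_span, Submodule.span_le, Set.image_subset_iff]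
  exact forall_congr' fun _ ↦ and_imp

theorem coeff_eq_zero_of_mem_boundedForms {P : MvPolynomial σ R} (hP : P ∈ boundedForms R Y b n)
    {d : σ →₀ ℕ} (hd : b < d Y) : coeff d P = 0 :=
  notMem_support_iff.1 fun h ↦ hd.not_ge (hP h).2

theorem degreeOf_le_of_mem_boundedForms {P : MvPolynomial σ R} (hP : P ∈ boundedForms R Y b n) :
    P.degreeOf Y ≤ b :=
  degreeOf_le_iff.2 fun _ hd ↦ (hP hd).2

theorem map_mem_boundedForms {S : Type*} [CommRing S] (φ : R →+* S)
    {P : MvPolynomial σ R} (hP : P ∈ boundedForms R Y b n) :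
    map φ P ∈ boundedForms S Y b n := fun _ hd ↦ hP (support_map_subset φ P hd)

theorem boundedForms_le_homogeneousSubmodule :
    boundedForms R Y b n ≤ homogeneousSubmodule σ R n :=
  boundedForms_le_iff.2 fun _ hdeg _ ↦ isHomogeneous_monomial _ hdeg

theorem boundedForms_eq_homogeneousSubmodule (h : n ≤ b) :
    boundedForms R Y b n = homogeneousSubmodule σ R n := by
  refine le_antisymm boundedForms_le_homogeneousSubmodule fun P hP d hd ↦ ?_
  have hdeg : d.degree = n := by
    rw [Finsupp.degree_eq_weight_one]
    exact hP (mem_support_iff.1 hd)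
  exact ⟨hdeg, ((Finsupp.le_degree Y d).trans hdeg.le).trans h⟩

theorem boundedForms_mul_le (b b' n n' : ℕ) :
    boundedForms R Y b n * boundedForms R Y b' n' ≤ boundedForms R Y (b + b') (n + n') := by
  rw [boundedForms, boundedForms, ← restrictSupport_add]
  refine restrictSupport_mono R (Set.add_subset_iff.2 ?_)
  rintro d ⟨rfl, hd⟩ e ⟨rfl, he⟩
  exact ⟨map_add _ _ _, add_le_add hd he⟩

theorem X_mem_boundedForms {i : σ} (hi : i ≠ Y) : (X i : MvPolynomial σ R) ∈ boundedForms R Y 0 1 :=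
  monomial_mem_boundedForms (by simp) (by simp [hi]) 1

end BoundedForms

section Division

variable {R σ : Type*} [CommRing R] {Y : σ} {f : MvPolynomial σ R} {r : ℕ}

/-- One division step: `Y ^ (r + 1)` is rewritten as `Y ^ (r + 1) - f`. -/
theorem boundedForms_succ_le_sup_span (hf : X Y ^ (r + 1) - f ∈ boundedForms R Y r (r + 1))
    {b : ℕ} (hb : r ≤ b) (n : ℕ) :
    boundedForms R Y (b + 1) n ≤
      boundedForms R Y b n ⊔ (Ideal.span {f}).restrictScalars R := by
  refine boundedForms_le_iff.2 fun d hdeg hdY ↦ ?_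
  obtain hd | hd := hdY.lt_or_eq
  · exact Submodule.mem_sup_left (monomial_mem_boundedForms hdeg (Nat.lt_succ_iff.1 hd) 1)
  obtain ⟨e, rfl⟩ : ∃ e, d = Finsupp.single Y (r + 1) + e :=
    le_iff_exists_add.1 (Finsupp.single_le_iff.2 (by omega))
  have hmul : (X Y ^ (r + 1) - f) * monomial e 1 ∈ boundedForms R Y b n := by
    have heY : e Y ≤ b - r := by
      rw [Finsupp.add_apply, Finsupp.single_eq_same] at hd
      omega
    have he : monomial e (1 : R) ∈ boundedForms R Y (b - r) e.degree :=
      monomial_mem_boundedForms rfl heY 1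
    have h := boundedForms_mul_le _ _ _ _ (Submodule.mul_mem_mul hf he)
    rwa [Nat.add_sub_cancel' hb, show r + 1 + e.degree = n by simpa using hdeg] at h
  have hsplit : monomial (Finsupp.single Y (r + 1) + e) (1 : R) =
      (X Y ^ (r + 1) - f) * monomial e 1 + monomial e 1 * f := by
    rw [sub_mul, X_pow_eq_monomial, monomial_mul, one_mul]
    ring
  rw [hsplit]
  exact Submodule.add_mem_sup hmul (Ideal.mul_mem_left _ _ (Ideal.mem_span_singleton_self f))

theorem homogeneousSubmodule_le_boundedForms_sup_span
    (hf : X Y ^ (r + 1) - f ∈ boundedForms R Y r (r + 1)) (n : ℕ) :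
    homogeneousSubmodule σ R n ≤ boundedForms R Y r n ⊔ (Ideal.span {f}).restrictScalars R := by
  have hreduce (c : ℕ) : boundedForms R Y (r + c) n ≤
      boundedForms R Y r n ⊔ (Ideal.span {f}).restrictScalars R := by
    induction c with
    | zero => exact le_sup_left
    | succ c ih =>
      exact (boundedForms_succ_le_sup_span hf (Nat.le_add_right r c) n).trans
        (sup_le ih le_sup_right)
  rw [← boundedForms_eq_homogeneousSubmodule (Y := Y) (Nat.le_add_left n r)]
  exact hreduce n

theorem isHomogeneous_of_X_pow_sub_mem
    (hf : X Y ^ (r + 1) - f ∈ boundedForms R Y r (r + 1)) : f.IsHomogeneous (r + 1) := by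
  rw [← sub_sub_cancel (X Y ^ (r + 1)) f]
  exact (isHomogeneous_X_pow _ _).sub (boundedForms_le_homogeneousSubmodule hf)

theorem degreeOf_eq_succ_of_X_pow_sub_mem [Nontrivial R]
    (hf : X Y ^ (r + 1) - f ∈ boundedForms R Y r (r + 1)) : f.degreeOf Y = r + 1 := by
  refine le_antisymm ?_ (Nat.le_of_not_lt fun hlt ↦ ?_)
  · rw [show f = X Y ^ (r + 1) - (X Y ^ (r + 1) - f) by ring]
    refine (degreeOf_sub_le _ _ _).trans (max_le (by simp) ?_)
    exact (degreeOf_le_of_mem_boundedForms hf).trans (Nat.le_succ r)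
  · have hX : degreeOf Y (X Y ^ (r + 1) : MvPolynomial σ R) ≤ r := by
      rw [show (X Y ^ (r + 1) : MvPolynomial σ R) = (X Y ^ (r + 1) - f) + f by ring]
      exact (degreeOf_add_le _ _ _).trans
        (max_le (degreeOf_le_of_mem_boundedForms hf) (Nat.lt_succ_iff.1 hlt))
    simp at hX

theorem X_pow_sub_map_mem_boundedForms {S : Type*} [CommRing S] (φ : R →+* S)
    (hf : X Y ^ (r + 1) - f ∈ boundedForms R Y r (r + 1)) :
    X Y ^ (r + 1) - map φ f ∈ boundedForms S Y r (r + 1) := by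
  simpa using map_mem_boundedForms φ hf

theorem eq_zero_of_mem_span_singleton_of_degreeOf_lt [IsDomain R] {P : MvPolynomial σ R}
    (hP : P ∈ Ideal.span {f}) (hdeg : P.degreeOf Y < f.degreeOf Y) : P = 0 := by
  obtain ⟨q, rfl⟩ := Ideal.mem_span_singleton'.1 hP
  by_contra hne
  rw [degreeOf_mul_eq (left_ne_zero_of_mul hne) (right_ne_zero_of_mul hne)] at hdeg
  omega

end Division

section Variables

variable {R : Type*} [CommRing R] {s : ℕ}

/-- The `R`-span of the first `j` variables of `R[X₁, …, Xₛ, Y]`, where `j ≤ s`. -/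
noncomputable abbrev varSpan (R : Type*) [CommRing R] (s j : ℕ) :
    Submodule R (MvPolynomial (Fin (s + 1)) R) :=
  prefixSpan R (fun i : Fin s ↦ X i.castSucc) j

theorem varSpan_le_boundedForms (j : ℕ) : varSpan R s j ≤ boundedForms R (Fin.last s) 0 1 := by
  refine Submodule.span_le.2 ?_
  rintro _ ⟨i, -, rfl⟩
  exact X_mem_boundedForms i.castSucc_ne_last

theorem varSpan_mul_boundedForms_le (j b n : ℕ) :
    varSpan R s j * boundedForms R (Fin.last s) b n ≤ boundedForms R (Fin.last s) b (n + 1) := by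
  simpa only [zero_add, add_comm 1 n] using
    (mul_le_mul_left (varSpan_le_boundedForms j) _).trans (boundedForms_mul_le 0 b 1 n)

theorem monomial_mem_varSpan_mul_boundedForms {d : Fin (s + 1) →₀ ℕ} {b n : ℕ}
    (hdeg : d.degree = n + 1) (hb : d (Fin.last s) ≤ b) (hlast : d (Fin.last s) ≤ n) :
    monomial d (1 : R) ∈ varSpan R s s * boundedForms R (Fin.last s) b n := by
  obtain ⟨i, hi⟩ : ∃ i : Fin s, d i.castSucc ≠ 0 := by
    by_contra! h
    have hsum : d.degree = d (Fin.last s) := by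
      simp [Finsupp.degree_eq_sum, Fin.sum_univ_castSucc, h]
    omega
  obtain ⟨e, rfl⟩ : ∃ e, d = Finsupp.single i.castSucc 1 + e :=
    le_iff_exists_add.1 (Finsupp.single_le_iff.2 (Nat.one_le_iff_ne_zero.2 hi))
  rw [← one_mul (1 : R), ← monomial_mul]
  have he : monomial e (1 : R) ∈ boundedForms R (Fin.last s) b n :=
    monomial_mem_boundedForms (by simpa [add_comm 1] using hdeg) (by simpa using hb) 1
  exact Submodule.mul_mem_mul (Submodule.subset_span ⟨i, i.isLt, rfl⟩) he

theorem boundedForms_succ_le_varSpan_mul {b n : ℕ} (hbn : b ≤ n) :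
    boundedForms R (Fin.last s) b (n + 1) ≤ varSpan R s s * boundedForms R (Fin.last s) b n :=
  boundedForms_le_iff.2 fun _ hdeg hb ↦
    monomial_mem_varSpan_mul_boundedForms hdeg hb (hb.trans hbn)

theorem homogeneousSubmodule_succ_le (n : ℕ) :
    homogeneousSubmodule (Fin (s + 1)) R (n + 1) ≤
      Submodule.span R {X (Fin.last s) ^ (n + 1)} ⊔
        varSpan R s s * boundedForms R (Fin.last s) n n := by
  rw [← boundedForms_eq_homogeneousSubmodule (Y := Fin.last s) le_rfl]
  refine boundedForms_le_iff.2 fun d hdeg hd ↦ ?_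
  obtain hlt | heq := hd.lt_or_eq
  · have hle := Nat.lt_succ_iff.1 hlt
    exact Submodule.mem_sup_right (monomial_mem_varSpan_mul_boundedForms hdeg hle hle)
  · obtain ⟨e, rfl⟩ : ∃ e, d = Finsupp.single (Fin.last s) (n + 1) + e :=
      le_iff_exists_add.1 (Finsupp.single_le_iff.2 heq.ge)
    obtain rfl : e = 0 := (Finsupp.degree_eq_zero_iff e).1 (by simpa using hdeg)
    rw [add_zero, ← X_pow_eq_monomial]
    exact Submodule.mem_sup_left (Submodule.mem_span_singleton_self _)

variable (g : Fin (s + 1) → R)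

theorem map_aeval_varSpan (j : ℕ) :
    (varSpan R s j).map (aeval g).toLinearMap = prefixSpan R (Fin.init g) j := by
  rw [map_prefixSpan]
  congr 1
  ext i
  simp [Fin.init]

theorem map_aeval_varSpan_mul (j : ℕ) (N : Submodule R (MvPolynomial (Fin (s + 1)) R)) :
    (varSpan R s j * N).map (aeval g).toLinearMap =
      prefixSpan R (Fin.init g) j * N.map (aeval g).toLinearMap := by
  rw [Submodule.map_mul, map_aeval_varSpan]

variable {g}

theorem mem_map_aeval {N : Submodule R (MvPolynomial (Fin (s + 1)) R)} {a : R} :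
    a ∈ N.map (aeval g).toLinearMap ↔ ∃ P ∈ N, eval g P = a := by
  simp

theorem eval_mem_prefixSpan {j : ℕ} {N : Submodule R (MvPolynomial (Fin (s + 1)) R)}
    {P : MvPolynomial (Fin (s + 1)) R} (hP : P ∈ varSpan R s j * N) :
    eval g P ∈ prefixSpan R (Fin.init g) j := by
  induction hP using Submodule.mul_induction_on' with
  | mem_mul_mem v hv q _ =>
    rw [map_mul]
    exact Ideal.mul_mem_right _ _ (map_aeval_varSpan g j ▸ mem_map_aeval.2 ⟨v, hv, rfl⟩)
  | add P _ Q _ hP hQ => exact map_add (eval g) P Q ▸ add_mem hP hQ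

end Variables

section Relations

variable {R : Type*} [CommRing R] {s : ℕ} {g : Fin (s + 1) → R}

/-- The forms of degree `n` and of `Y`-degree at most `r` that vanish at the generators `g`. -/
noncomputable def boundedRelations (g : Fin (s + 1) → R) (r n : ℕ) :
    Submodule R (MvPolynomial (Fin (s + 1)) R) :=
  boundedForms R (Fin.last s) r n ⊓ LinearMap.ker (aeval g).toLinearMap

theorem mem_boundedRelations {r n : ℕ} {H : MvPolynomial (Fin (s + 1)) R} :
    H ∈ boundedRelations g r n ↔ H ∈ boundedForms R (Fin.last s) r n ∧ eval g H = 0 := by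
  simp [boundedRelations]

theorem map_aeval_boundedForms {f : MvPolynomial (Fin (s + 1)) R} {r : ℕ}
    (hf : X (Fin.last s) ^ (r + 1) - f ∈ boundedForms R (Fin.last s) r (r + 1))
    (hfg : eval g f = 0) (n : ℕ) :
    (boundedForms R (Fin.last s) r n).map (aeval g).toLinearMap =
      Ideal.span (Set.range g) ^ n := by
  rw [Ideal.span_pow_eq_map_homogeneousSubmodule]
  refine le_antisymm (Submodule.map_mono boundedForms_le_homogeneousSubmodule) ?_
  refine (Submodule.map_mono (homogeneousSubmodule_le_boundedForms_sup_span hf n)).trans ?_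
  rw [Submodule.map_sup]
  refine sup_le le_rfl ?_
  rintro _ ⟨P, hP, rfl⟩
  obtain ⟨q, rfl⟩ := Ideal.mem_span_singleton'.1 hP
  exact ⟨0, zero_mem _, by simp [hfg]⟩

theorem exists_boundedRelation_add_mul {f H : MvPolynomial (Fin (s + 1)) R} {r n : ℕ}
    (hf : X (Fin.last s) ^ (r + 1) - f ∈ boundedForms R (Fin.last s) r (r + 1))
    (hfg : eval g f = 0) (hH : H.IsHomogeneous n) (hHg : eval g H = 0) :
    ∃ P ∈ boundedRelations g r n, ∃ q, P + q * f = H := by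
  obtain ⟨P, hP, qf, hqf, hsum⟩ :=
    Submodule.mem_sup.1 (homogeneousSubmodule_le_boundedForms_sup_span hf n hH)
  obtain ⟨q, rfl⟩ := Ideal.mem_span_singleton'.1 hqf
  have hPg : eval g P = 0 := by simpa [hfg, hHg] using congrArg (eval g) hsum
  exact ⟨P, mem_boundedRelations.2 ⟨hP, hPg⟩, q, hsum⟩

theorem X_mul_mem_varSpan_mul (i : Fin s) {j b n : ℕ} {E : MvPolynomial (Fin (s + 1)) R}
    (hE : E ∈ varSpan R s j * boundedForms R (Fin.last s) b n) :
    X i.castSucc * E ∈ varSpan R s j * boundedForms R (Fin.last s) b (n + 1) := by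
  have hX : (X i.castSucc : MvPolynomial (Fin (s + 1)) R) ∈ varSpan R s s :=
    Submodule.subset_span ⟨i, i.isLt, rfl⟩
  have h := Submodule.mul_mem_mul hX hE
  rw [mul_left_comm] at h
  exact mul_le_mul_right (varSpan_mul_boundedForms_le s b n) _ h

/-- Write `H = H' + Xⱼ D` with `H'` involving `X₁, …, Xⱼ₋₁` only. Then `D` agrees at `g` with
some form `E` in the ideal `(X₁, …, Xⱼ₋₁)`, so `D - E` is a relation and
`H = Xⱼ (D - E) + (H' + Xⱼ E)`. -/
theorem mem_varSpan_mul_boundedRelations {I : Ideal R} {r n : ℕ}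
    (hmap : ∀ l, (boundedForms R (Fin.last s) r l).map (aeval g).toLinearMap = I ^ l)
    (hcolon : ∀ j : Fin s, ∀ a ∈ I ^ (n + 1), Fin.init g j * a ∈ prefixSpan R (Fin.init g) j →
      a ∈ prefixSpan R (Fin.init g) j * I ^ n)
    {j : ℕ} (hj : j ≤ s) {H : MvPolynomial (Fin (s + 1)) R}
    (hH : H ∈ varSpan R s j * boundedForms R (Fin.last s) r (n + 1)) (hHg : eval g H = 0) :
    H ∈ varSpan R s j * boundedRelations g r (n + 1) := by
  induction j generalizing H with
  | zero => simpa [prefixSpan_zero] using hH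
  | succ j ih =>
    let i : Fin s := ⟨j, hj⟩
    have hsucc : varSpan R s (j + 1) = varSpan R s j ⊔ Submodule.span R {X i.castSucc} :=
      prefixSpan_succ _ i
    rw [hsucc, Submodule.sup_mul] at hH ⊢
    obtain ⟨H', hH', _, hXD, rfl⟩ := Submodule.mem_sup.1 hH
    obtain ⟨D, hD, rfl⟩ := Submodule.mem_span_singleton_mul.1 hXD
    rw [map_add, map_mul, eval_X] at hHg
    have hDI : eval g D ∈ I ^ (n + 1) := hmap (n + 1) ▸ mem_map_aeval.2 ⟨D, hD, rfl⟩
    have hxD : Fin.init g i * eval g D ∈ prefixSpan R (Fin.init g) j := by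
      rw [Fin.init, eq_neg_of_add_eq_zero_right hHg]
      exact neg_mem (eval_mem_prefixSpan hH')
    have hDP := hcolon i _ hDI hxD
    rw [← hmap n, ← map_aeval_varSpan_mul] at hDP
    obtain ⟨E, hE, hED⟩ := mem_map_aeval.1 hDP
    have hDE : D - E ∈ boundedRelations g r (n + 1) :=
      mem_boundedRelations.2 ⟨sub_mem hD (varSpan_mul_boundedForms_le _ _ _ hE), by simp [hED]⟩
    have hXE : X i.castSucc * E ∈ varSpan R s j * boundedForms R (Fin.last s) r (n + 1) :=
      X_mul_mem_varSpan_mul i hE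
    have hrest := ih (by omega) (add_mem hH' hXE) (by simp [hED, hHg])
    rw [show H' + X i.castSucc * D = (H' + X i.castSucc * E) + X i.castSucc * (D - E) by ring]
    exact Submodule.add_mem_sup hrest
      (Submodule.mul_mem_mul (Submodule.mem_span_singleton_self _) hDE)

theorem boundedRelations_succ_le {I : Ideal R} {r n : ℕ} (hr : 1 ≤ r) (hrn : r ≤ n)
    (hmap : ∀ l, (boundedForms R (Fin.last s) r l).map (aeval g).toLinearMap = I ^ l)
    (hcolon : ∀ (j : Fin s) (l : ℕ), ∀ a ∈ I ^ (l + 1),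
      Fin.init g j * a ∈ prefixSpan R (Fin.init g) j → a ∈ prefixSpan R (Fin.init g) j * I ^ l) :
    boundedRelations g r (n + 1) ≤ varSpan R s s * boundedRelations g r n := by
  obtain ⟨n, rfl⟩ := Nat.exists_eq_add_of_le' (hr.trans hrn)
  rintro H ⟨hH, hHg⟩
  exact mem_varSpan_mul_boundedRelations hmap (fun j ↦ hcolon j n) le_rfl
    (boundedForms_succ_le_varSpan_mul hrn hH) (by simpa using hHg)

end Relations

section LeadingCoefficients

variable {R σ : Type*} [CommRing R]

/-- The polynomials all of whose coefficients at monomials of `Y`-degree `r` lie in `𝔞`. -/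
def coeffsOfDegreeIn (Y : σ) (r : ℕ) (𝔞 : Ideal R) : Submodule R (MvPolynomial σ R) where
  carrier := {P | ∀ d : σ →₀ ℕ, d Y = r → coeff d P ∈ 𝔞}
  zero_mem' _ _ := by simp
  add_mem' hP hQ d hd := by simpa using add_mem (hP d hd) (hQ d hd)
  smul_mem' c P hP d hd := by simpa using 𝔞.mul_mem_left c (hP d hd)

variable {Y : σ} {r : ℕ} {𝔞 : Ideal R}

theorem X_mul_mem_coeffsOfDegreeIn {i : σ} (hi : i ≠ Y) {P : MvPolynomial σ R}
    (hP : P ∈ coeffsOfDegreeIn Y r 𝔞) : X i * P ∈ coeffsOfDegreeIn Y r 𝔞 := by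
  classical
  intro d hd
  rw [coeff_X_mul']
  split_ifs
  · exact hP _ (by simp [hi, hd])
  · exact zero_mem _

theorem varSpan_mul_coeffsOfDegreeIn_le {s j : ℕ} :
    varSpan R s j * coeffsOfDegreeIn (Fin.last s) r 𝔞 ≤ coeffsOfDegreeIn (Fin.last s) r 𝔞 := by
  refine Submodule.mul_le.2 fun v hv P hP ↦ ?_
  induction hv using Submodule.span_induction with
  | mem v hv =>
    obtain ⟨i, -, rfl⟩ := hv
    exact X_mul_mem_coeffsOfDegreeIn i.castSucc_ne_last hP
  | zero => simp
  | add v w _ _ hv hw => exact add_mul v w P ▸ add_mem hv hw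
  | smul c v _ hv => exact smul_mul_assoc c v P ▸ Submodule.smul_mem _ c hv

theorem boundedForms_le_coeffsOfDegreeIn {b n : ℕ} (hb : b < r) :
    boundedForms R Y b n ≤ coeffsOfDegreeIn Y r 𝔞 := fun P hP d hd ↦ by
  rw [coeff_eq_zero_of_mem_boundedForms hP (by omega)]
  exact zero_mem _

theorem smul_X_pow_mem_coeffsOfDegreeIn {c : R} (hc : c ∈ 𝔞) (n : ℕ) :
    c • X Y ^ n ∈ coeffsOfDegreeIn Y r 𝔞 := fun d _ ↦ by
  rw [coeff_smul, smul_eq_mul]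
  exact 𝔞.mul_mem_right _ hc

variable {s : ℕ} {g : Fin (s + 1) → R}

theorem boundedRelations_self_le_coeffsOfDegreeIn (hr : 1 ≤ r)
    (hy : ∀ c : R, c * g (Fin.last s) ^ r ∈
      prefixSpan R (Fin.init g) s * Ideal.span (Set.range g) ^ (r - 1) → c ∈ 𝔞) :
    boundedRelations g r r ≤ coeffsOfDegreeIn (Fin.last s) r 𝔞 := by
  obtain ⟨r, rfl⟩ := Nat.exists_eq_add_of_le' hr
  intro H hH
  obtain ⟨hHform, hHg⟩ := mem_boundedRelations.1 hH
  obtain ⟨_, hYr, L, hL, rfl⟩ := Submodule.mem_sup.1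
    (homogeneousSubmodule_succ_le r (boundedForms_le_homogeneousSubmodule hHform))
  obtain ⟨c, rfl⟩ := Submodule.mem_span_singleton.1 hYr
  have hLg : eval g L ∈ prefixSpan R (Fin.init g) s * Ideal.span (Set.range g) ^ r := by
    rw [Ideal.span_pow_eq_map_homogeneousSubmodule,
      ← boundedForms_eq_homogeneousSubmodule (Y := Fin.last s) le_rfl, ← map_aeval_varSpan_mul]
    exact mem_map_aeval.2 ⟨L, hL, rfl⟩
  have hc : c ∈ 𝔞 := hy c <| by
    simp only [map_add, smul_eval, map_pow, eval_X] at hHg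
    rw [eq_neg_of_add_eq_zero_left hHg]
    exact neg_mem hLg
  exact add_mem (smul_X_pow_mem_coeffsOfDegreeIn hc _)
    (boundedForms_le_coeffsOfDegreeIn r.lt_succ_self (varSpan_mul_boundedForms_le _ _ _ hL))

theorem boundedRelations_le_coeffsOfDegreeIn
    (hdesc : ∀ n, r ≤ n → boundedRelations g r (n + 1) ≤ varSpan R s s * boundedRelations g r n)
    (hself : boundedRelations g r r ≤ coeffsOfDegreeIn (Fin.last s) r 𝔞) (n : ℕ) :
    boundedRelations g r n ≤ coeffsOfDegreeIn (Fin.last s) r 𝔞 := by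
  obtain hnr | hrn := lt_or_ge n r
  · have hle : boundedForms R (Fin.last s) r n ≤ boundedForms R (Fin.last s) n n := by
      rw [boundedForms_eq_homogeneousSubmodule le_rfl]
      exact boundedForms_le_homogeneousSubmodule
    exact (inf_le_left.trans hle).trans (boundedForms_le_coeffsOfDegreeIn hnr)
  · induction n, hrn using Nat.le_induction with
    | base => exact hself
    | succ n hn ih =>
      exact ((hdesc n hn).trans (mul_le_mul_right ih _)).trans varSpan_mul_coeffsOfDegreeIn_le

end LeadingCoefficients

section Reduction

variable {R k : Type*} [CommRing R] [CommRing k] [IsDomain k] {s r : ℕ} {g : Fin (s + 1) → R}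
  {f : MvPolynomial (Fin (s + 1)) R} {φ : R →+* k}

/-- Multiplying by a power of `Y` and dividing by `f` moves a nonzero coefficient of highest
`Y`-degree of `map φ H` to `Y`-degree exactly `r`. -/
theorem map_eq_zero_of_mem_boundedRelations
    (hf : X (Fin.last s) ^ (r + 1) - f ∈ boundedForms R (Fin.last s) r (r + 1))
    (hfg : eval g f = 0)
    (htop : ∀ n, boundedRelations g r n ≤ coeffsOfDegreeIn (Fin.last s) r (RingHom.ker φ))
    {n : ℕ} {H : MvPolynomial (Fin (s + 1)) R} (hH : H ∈ boundedRelations g r n) :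
    map φ H = 0 := by
  obtain ⟨hHform, hHg⟩ := mem_boundedRelations.1 hH
  by_contra hne
  obtain ⟨c, hc⟩ := Nat.exists_eq_add_of_le
    (degreeOf_le_of_mem_boundedForms (map_mem_boundedForms φ hHform))
  have hhom : (H * X (Fin.last s) ^ c).IsHomogeneous (n + c) :=
    (boundedForms_le_homogeneousSubmodule hHform).mul (isHomogeneous_X_pow _ _)
  obtain ⟨P, hP, q, hPq⟩ := exists_boundedRelation_add_mul hf hfg hhom (by simp [hHg])
  have hdeg : degreeOf (Fin.last s) (map φ H * X (Fin.last s) ^ c) = r := by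
    rw [degreeOf_mul_X_self_pow_eq_add_of_ne_zero _ _ hne, hc]
  have hmapP : map φ H * X (Fin.last s) ^ c = map φ P := by
    rw [← sub_eq_zero]
    refine eq_zero_of_mem_span_singleton_of_degreeOf_lt (f := map φ f) (Y := Fin.last s) ?_ ?_
    · refine Ideal.mem_span_singleton'.2 ⟨map φ q, ?_⟩
      rw [← map_mul, eq_sub_of_add_eq' hPq, map_sub, map_mul, map_pow, map_X]
    · rw [degreeOf_eq_succ_of_X_pow_sub_mem (X_pow_sub_map_mem_boundedForms φ hf), Nat.lt_succ_iff]
      exact (degreeOf_sub_le _ _ _).trans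
        (max_le hdeg.le (degreeOf_le_of_mem_boundedForms (map_mem_boundedForms φ hP.1)))
  have hPne : map φ P ≠ 0 := hmapP ▸ mul_ne_zero hne (pow_ne_zero _ (X_ne_zero _))
  obtain ⟨d, hd, hdr⟩ := Finset.exists_mem_eq_sup (map φ P).support (support_nonempty.2 hPne)
    fun d ↦ d (Fin.last s)
  rw [← degreeOf_eq_sup, ← hmapP, hdeg] at hdr
  exact mem_support_iff.1 hd ((coeff_map φ P d).trans (htop _ hP d hdr.symm))

end Reduction

section Equations

variable {R : Type*} [CommRing R] {m : ℕ} {g : Fin m → R}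

theorem reesPres_monomial (g : Fin m → R) (d : Fin m →₀ ℕ) (c : R) :
    reesPres g (monomial d c) = Polynomial.monomial d.degree (eval g (monomial d c)) := by
  rw [reesPres, aeval_monomial, eval_monomial, ← Polynomial.C_mul_X_pow_eq_monomial,
    Finsupp.degree_eq_sum, ← Finset.prod_pow_eq_pow_sum]
  simp [Finsupp.prod_fintype, mul_pow, Finset.prod_mul_distrib, mul_assoc]

theorem coeff_reesPres (g : Fin m → R) (P : MvPolynomial (Fin m) R) (n : ℕ) :
    (reesPres g P).coeff n = eval g (homogeneousComponent n P) := by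
  induction P using MvPolynomial.induction_on' with
  | monomial d c =>
    have hd : monomial d c ∈ homogeneousSubmodule (Fin m) R d.degree :=
      isHomogeneous_monomial c rfl
    rw [reesPres_monomial, Polynomial.coeff_monomial, homogeneousComponent_of_mem hd]
    simp only [eq_comm (a := n), apply_ite (eval g), map_zero]
  | add P Q hP hQ => simp [hP, hQ]

theorem mem_presKer_iff {P : MvPolynomial (Fin m) R} :
    P ∈ presKer g ↔ ∀ n, eval g (homogeneousComponent n P) = 0 := by
  simp_rw [presKer, RingHom.mem_ker, Polynomial.ext_iff, Polynomial.coeff_zero, ← coeff_reesPres]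

theorem mem_presKer_iff_of_isHomogeneous {n : ℕ} {P : MvPolynomial (Fin m) R}
    (hP : P.IsHomogeneous n) : P ∈ presKer g ↔ eval g P = 0 := by
  simp [mem_presKer_iff, homogeneousComponent_of_mem hP, apply_ite (eval g)]

theorem presKerLe_mono (g : Fin m → R) : Monotone (presKerLe g) := fun _ _ hdl ↦
  Ideal.span_mono fun _ ⟨hP, k, hk, hPk⟩ ↦ ⟨hP, k, hk.trans hdl, hPk⟩

theorem presKerLe_le_presKer (g : Fin m → R) (d : ℕ) : presKerLe g d ≤ presKer g :=
  Ideal.span_le.2 fun _ hP ↦ hP.1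

end Equations

section Generators

variable {R : Type*} [CommRing R] {s r : ℕ} {g : Fin (s + 1) → R} {f : MvPolynomial (Fin (s + 1)) R}

theorem mem_boundedRelations_of_mem_presKer {n : ℕ} (hn : n ≤ r)
    {P : MvPolynomial (Fin (s + 1)) R} (hP : P ∈ presKer g) (hPn : P.IsHomogeneous n) :
    P ∈ boundedRelations g r n := by
  rw [mem_boundedRelations, boundedForms_eq_homogeneousSubmodule hn]
  exact ⟨hPn, (mem_presKer_iff_of_isHomogeneous hPn).1 hP⟩

theorem boundedRelations_le_presKerLe
    (hdesc : ∀ n, r ≤ n → boundedRelations g r (n + 1) ≤ varSpan R s s * boundedRelations g r n)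
    (n : ℕ) : boundedRelations g r n ≤ (presKerLe g r).restrictScalars R := by
  have hsmall {n : ℕ} (hn : n ≤ r) :
      boundedRelations g r n ≤ (presKerLe g r).restrictScalars R := fun P hP ↦ by
    obtain ⟨hPform, hPg⟩ := mem_boundedRelations.1 hP
    have hPn := boundedForms_le_homogeneousSubmodule hPform
    exact Ideal.subset_span ⟨(mem_presKer_iff_of_isHomogeneous hPn).2 hPg, n, hn, hPn⟩
  obtain hnr | hrn := le_total n r
  · exact hsmall hnr
  · induction n, hrn using Nat.le_induction with
    | base => exact hsmall le_rfl
    | succ n hn ih =>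
      exact (hdesc n hn).trans (Submodule.mul_le.2 fun v _ P hP ↦ Ideal.mul_mem_left _ v (ih hP))

theorem presKer_le_span_sup_presKerLe
    (hf : X (Fin.last s) ^ (r + 1) - f ∈ boundedForms R (Fin.last s) r (r + 1))
    (hfg : eval g f = 0)
    (hdesc : ∀ n, r ≤ n → boundedRelations g r (n + 1) ≤ varSpan R s s * boundedRelations g r n) :
    presKer g ≤ Ideal.span {f} ⊔ presKerLe g r := by
  intro H hH
  rw [← sum_homogeneousComponent H]
  refine sum_mem fun n _ ↦ ?_
  obtain ⟨P, hP, q, hPq⟩ := exists_boundedRelation_add_mul hf hfg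
    (homogeneousComponent_isHomogeneous n H) (mem_presKer_iff.1 hH n)
  rw [← hPq]
  exact add_mem (Ideal.mem_sup_right (boundedRelations_le_presKerLe hdesc n hP))
    (Ideal.mem_sup_left (Ideal.mul_mem_left _ q (Ideal.mem_span_singleton_self f)))

end Generators

section RelationType

variable {R : Type*} [CommRing R] [IsLocalRing R] {s r : ℕ} {g : Fin (s + 1) → R}
  {f : MvPolynomial (Fin (s + 1)) R}

theorem presKerLe_le_ker_map_residue
    (hzero : ∀ n, ∀ H ∈ boundedRelations g r n, map (IsLocalRing.residue R) H = 0) :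
    presKerLe g r ≤ RingHom.ker (map (σ := Fin (s + 1)) (IsLocalRing.residue R)) :=
  Ideal.span_le.2 fun _ ⟨hP, n, hn, hPn⟩ ↦
    hzero n _ (mem_boundedRelations_of_mem_presKer hn hP hPn)

theorem fiberKer_eq_span_singleton (hfg : f ∈ presKer g)
    (hle : presKer g ≤ Ideal.span {f} ⊔ presKerLe g r)
    (hres : presKerLe g r ≤ RingHom.ker (map (σ := Fin (s + 1)) (IsLocalRing.residue R))) :
    fiberKer g = Ideal.span {map (IsLocalRing.residue R) f} := by
  refine le_antisymm ?_ (Ideal.span_le.2 (Set.singleton_subset_iff.2 (Ideal.mem_map_of_mem _ hfg)))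
  refine (Ideal.map_mono hle).trans ?_
  rw [Ideal.map_sup, (Ideal.map_eq_bot_iff_le_ker _).2 hres, sup_bot_eq, Ideal.map_span,
    Set.image_singleton]

theorem isLeast_presKer
    (hf : X (Fin.last s) ^ (r + 1) - f ∈ boundedForms R (Fin.last s) r (r + 1))
    (hfg : f ∈ presKer g) (hle : presKer g ≤ Ideal.span {f} ⊔ presKerLe g r)
    (hres : presKerLe g r ≤ RingHom.ker (map (σ := Fin (s + 1)) (IsLocalRing.residue R))) :
    IsLeast {N : ℕ | 1 ≤ N ∧ presKer g = presKerLe g N} (r + 1) := by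
  have hfLe : f ∈ presKerLe g (r + 1) :=
    Ideal.subset_span ⟨hfg, r + 1, le_rfl, isHomogeneous_of_X_pow_sub_mem hf⟩
  refine ⟨⟨Nat.le_add_left 1 r, le_antisymm (hle.trans (sup_le ?_ ?_)) ?_⟩, ?_⟩
  · exact Ideal.span_le.2 (Set.singleton_subset_iff.2 hfLe)
  · exact presKerLe_mono g r.le_succ
  · exact presKerLe_le_presKer g _
  · rintro N ⟨-, hN⟩
    by_contra! hlt
    have hf0 : map (IsLocalRing.residue R) f = 0 :=
      hres (presKerLe_mono g (Nat.lt_succ_iff.1 hlt) (hN ▸ hfg))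
    have hdeg := degreeOf_eq_succ_of_X_pow_sub_mem
      (X_pow_sub_map_mem_boundedForms (IsLocalRing.residue R) hf)
    simp [hf0] at hdeg

theorem isLeast_fiberKer {m : ℕ} {g : Fin m → R} {Y : Fin m}
    {F : MvPolynomial (Fin m) (IsLocalRing.ResidueField R)}
    (hF : X Y ^ (r + 1) - F ∈ boundedForms (IsLocalRing.ResidueField R) Y r (r + 1))
    (hspan : fiberKer g = Ideal.span {F}) :
    IsLeast {N : ℕ | 1 ≤ N ∧ fiberKer g = fiberKerLe g N} (r + 1) := by
  have hFmem : F ∈ fiberKer g := hspan ▸ Ideal.mem_span_singleton_self F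
  have hdegF := degreeOf_eq_succ_of_X_pow_sub_mem hF
  refine ⟨⟨Nat.le_add_left 1 r, le_antisymm ?_ (Ideal.span_le.2 fun _ hP ↦ hP.1)⟩, ?_⟩
  · rw [hspan, Ideal.span_le, Set.singleton_subset_iff]
    exact Ideal.subset_span ⟨hFmem, r + 1, le_rfl, isHomogeneous_of_X_pow_sub_mem hF⟩
  · rintro N ⟨-, hN⟩
    by_contra! hlt
    have hbot : fiberKerLe g N ≤ ⊥ := Ideal.span_le.2 fun P ⟨hP, n, hn, hPn⟩ ↦ by
      refine eq_zero_of_mem_span_singleton_of_degreeOf_lt (hspan ▸ hP) (Y := Y) ?_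
      have hPdeg : P.degreeOf Y ≤ n := (degreeOf_le_totalDegree P Y).trans hPn.totalDegree_le
      omega
    have hF0 : F = 0 := hbot (hN ▸ hFmem)
    simp [hF0] at hdegF

end RelationType

section ReductionNumber

variable {R : Type*} [CommRing R] {s r : ℕ} {g : Fin (s + 1) → R}

theorem pow_succ_eq_prefixSpan_mul_pow {n : ℕ}
    (hy : g (Fin.last s) ^ (n + 1) ∈ prefixSpan R (Fin.init g) s * Ideal.span (Set.range g) ^ n) :
    Ideal.span (Set.range g) ^ (n + 1) =
      prefixSpan R (Fin.init g) s * Ideal.span (Set.range g) ^ n := by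
  refine le_antisymm ?_ ?_
  · rw [Ideal.span_pow_eq_map_homogeneousSubmodule g (n + 1)]
    refine (Submodule.map_mono (homogeneousSubmodule_succ_le n)).trans ?_
    rw [Submodule.map_sup, map_aeval_varSpan_mul, boundedForms_eq_homogeneousSubmodule le_rfl,
      ← Ideal.span_pow_eq_map_homogeneousSubmodule, Submodule.map_span, Set.image_singleton]
    exact sup_le (Submodule.span_le.2 (by simpa using hy)) le_rfl
  · rw [pow_succ']
    refine Ideal.mul_mono_left (Ideal.span_mono ?_)
    rintro _ ⟨i, -, rfl⟩
    exact ⟨i.castSucc, rfl⟩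

theorem mem_maximalIdeal_of_mul_pow_mem [IsLocalRing R] (hr : 1 ≤ r)
    (hmin : ∀ n, Ideal.span (Set.range g) ^ (n + 1) =
      prefixSpan R (Fin.init g) s * Ideal.span (Set.range g) ^ n → r ≤ n) {c : R}
    (hc : c * g (Fin.last s) ^ r ∈
      prefixSpan R (Fin.init g) s * Ideal.span (Set.range g) ^ (r - 1)) :
    c ∈ IsLocalRing.maximalIdeal R := by
  obtain ⟨n, rfl⟩ := Nat.exists_eq_add_of_le' hr
  by_contra hunit
  rw [IsLocalRing.notMem_maximalIdeal] at hunit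
  exact (hmin n (pow_succ_eq_prefixSpan_mul_pow ((Ideal.unit_mul_mem_iff_mem _ hunit).1 hc))).not_gt
    n.lt_succ_self

theorem exists_eval_X_pow_sub_eq_zero
    (hred : Ideal.span (Set.range g) ^ (r + 1) =
      prefixSpan R (Fin.init g) s * Ideal.span (Set.range g) ^ r) :
    ∃ F : Fin s → MvPolynomial (Fin (s + 1)) R, (∀ i, (F i).IsHomogeneous r) ∧
      eval g (X (Fin.last s) ^ (r + 1) - ∑ i, X i.castSucc * F i) = 0 := by
  have hy : g (Fin.last s) ^ (r + 1) ∈ Ideal.span (Set.range g) ^ (r + 1) :=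
    Ideal.pow_mem_pow (Ideal.subset_span (Set.mem_range_self _)) _
  rw [hred, Ideal.span_pow_eq_map_homogeneousSubmodule, ← map_aeval_varSpan_mul,
    mem_map_aeval, varSpan, prefixSpan_length] at hy
  obtain ⟨E, hE, hEy⟩ := hy
  obtain ⟨F, hF, rfl⟩ := exists_eq_sum_of_mem_span_range_mul hE
  exact ⟨F, hF, by simp only [map_sub, map_pow, eval_X, hEy, sub_self]⟩

theorem sum_X_mul_mem_boundedForms {F : Fin s → MvPolynomial (Fin (s + 1)) R}
    (hF : ∀ i, (F i).IsHomogeneous r) :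
    ∑ i, X i.castSucc * F i ∈ boundedForms R (Fin.last s) r (r + 1) := by
  refine sum_mem fun i _ ↦ varSpan_mul_boundedForms_le s r r (Submodule.mul_mem_mul ?_ ?_)
  · exact Submodule.subset_span ⟨i, i.isLt, rfl⟩
  · rw [boundedForms_eq_homogeneousSubmodule le_rfl]
    exact hF i

end ReductionNumber

section FiberCone

open RingTheory.Sequence

variable {R : Type*} [CommRing R] {s r : ℕ} {g : Fin (s + 1) → R}

theorem mem_prefixSpan_mul_pow_of_mul_mem {I : Ideal R} {x : Fin s → R} (hxI : ∀ i, x i ∈ I)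
    (hreg : IsWeaklyRegular R (List.ofFn x)) {ξ : Fin s → reesAlgebra I}
    (hξ : ∀ i, (ξ i : Polynomial R) = Polynomial.C (x i) * Polynomial.X)
    (hgrreg : IsWeaklyRegular (GrRing I)
      ((List.ofFn fun i ↦ Ideal.Quotient.mk (grIdeal I) (ξ i)).take (s - 1)))
    (j : Fin s) (n : ℕ) {a : R} (ha : a ∈ I ^ (n + 1)) (hxa : x j * a ∈ prefixSpan R x j) :
    a ∈ prefixSpan R x j * I ^ n :=
  prefixSpan_inf_pow_le hxI hξ hgrreg j.isLt.le (by omega) n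
    ⟨mem_prefixSpan_of_mul_mem hreg j hxa, ha⟩

theorem map_residue_eq_zero_of_mem_boundedRelations [IsLocalRing R]
    {f : MvPolynomial (Fin (s + 1)) R} (hr : 1 ≤ r)
    (hmin : ∀ n, Ideal.span (Set.range g) ^ (n + 1) =
      prefixSpan R (Fin.init g) s * Ideal.span (Set.range g) ^ n → r ≤ n)
    (hf : X (Fin.last s) ^ (r + 1) - f ∈ boundedForms R (Fin.last s) r (r + 1))
    (hfg : eval g f = 0)
    (hdesc : ∀ n, r ≤ n → boundedRelations g r (n + 1) ≤ varSpan R s s * boundedRelations g r n)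
    (n : ℕ) : ∀ H ∈ boundedRelations g r n, map (IsLocalRing.residue R) H = 0 := by
  have hself : boundedRelations g r r ≤
      coeffsOfDegreeIn (Fin.last s) r (RingHom.ker (IsLocalRing.residue R)) := by
    rw [IsLocalRing.ker_residue]
    exact boundedRelations_self_le_coeffsOfDegreeIn hr
      fun _ hc ↦ mem_maximalIdeal_of_mul_pow_mem hr hmin hc
  exact fun _ ↦ map_eq_zero_of_mem_boundedRelations hf hfg
    (boundedRelations_le_coeffsOfDegreeIn hdesc hself)

theorem notMem_span_range_of_span_snoc_ne {x : Fin s → R} {y : R}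
    (hmin : Ideal.span (Set.range (Fin.snoc x y : Fin (s + 1) → R)) ≠
      Ideal.span ((Fin.snoc x y : Fin (s + 1) → R) '' {j | j ≠ Fin.last s})) :
    y ∉ Ideal.span (Set.range x) := by
  refine fun hy ↦ hmin (le_antisymm ?_ (Ideal.span_mono (Set.image_subset_range _ _)))
  have hx : Set.range x ⊆ (Fin.snoc x y : Fin (s + 1) → R) '' {j | j ≠ Fin.last s} := by
    rintro _ ⟨i, rfl⟩
    exact ⟨i.castSucc, i.castSucc_ne_last, Fin.snoc_castSucc ..⟩
  rw [Fin.range_snoc, Ideal.span_le]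
  exact Set.insert_subset (Ideal.span_mono hx hy) (hx.trans Ideal.subset_span)

theorem one_le_of_pow_succ_eq
    (hy : g (Fin.last s) ∉ prefixSpan R (Fin.init g) s)
    (hred : Ideal.span (Set.range g) ^ (r + 1) =
      prefixSpan R (Fin.init g) s * Ideal.span (Set.range g) ^ r) : 1 ≤ r := by
  rw [Nat.one_le_iff_ne_zero]
  rintro rfl
  have hIJ : Ideal.span (Set.range g) = prefixSpan R (Fin.init g) s := by simpa using hred
  exact hy (hIJ ▸ Ideal.subset_span (Set.mem_range_self _))

end FiberCone

theorem statement6_general {R : Type*} [CommRing R] [IsLocalRing R]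
    (I : Ideal R) {s : ℕ} (x : Fin s → R) (y : R) (r : ℕ)
    (J : Ideal R) (hJ : J = Ideal.span (Set.range x))
    (hgen : I = Ideal.span (Set.range (Fin.snoc x y)))
    (hy : y ∉ J)
    (hred : IsLeast {k : ℕ | I ^ (k + 1) = J * I ^ k} r)
    (hreg : RingTheory.Sequence.IsWeaklyRegular R (List.ofFn x))
    (ξ : Fin s → reesAlgebra I)
    (hξ : ∀ i, (ξ i : Polynomial R) = Polynomial.C (x i) * Polynomial.X)
    (hgrreg : RingTheory.Sequence.IsWeaklyRegular (GrRing I)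
      ((List.ofFn fun i => Ideal.Quotient.mk (grIdeal I) (ξ i)).take (s - 1))) :
    (∃ F : Fin s → MvPolynomial (Fin (s + 1)) (IsLocalRing.ResidueField R),
      (∀ i, (F i).IsHomogeneous r) ∧
      fiberKer (Fin.snoc x y)
        = Ideal.span {X (Fin.last s) ^ (r + 1) - ∑ i, X i.castSucc * F i}) ∧
    IsLeast {N : ℕ | 1 ≤ N ∧ fiberKer (Fin.snoc x y) = fiberKerLe (Fin.snoc x y) N} (r + 1) ∧
    IsLeast {N : ℕ | 1 ≤ N ∧ presKer (Fin.snoc x y) = presKerLe (Fin.snoc x y) N} (r + 1) := by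
  obtain ⟨g, rfl, rfl⟩ : ∃ g : Fin (s + 1) → R, x = Fin.init g ∧ y = g (Fin.last s) :=
    ⟨Fin.snoc x y, by simp, by simp⟩
  rw [Fin.snoc_init_self] at hgen ⊢
  rw [← Ideal.submodule_span_eq, ← prefixSpan_length] at hJ
  subst hgen hJ
  have hxI (i : Fin s) : Fin.init g i ∈ Ideal.span (Set.range g) := Ideal.subset_span ⟨_, rfl⟩
  have hr : 1 ≤ r := one_le_of_pow_succ_eq hy hred.1
  obtain ⟨F, hF, hfg⟩ := exists_eval_X_pow_sub_eq_zero hred.1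
  set f := X (Fin.last s) ^ (r + 1) - ∑ i, X i.castSucc * F i
  have hf : X (Fin.last s) ^ (r + 1) - f ∈ boundedForms R (Fin.last s) r (r + 1) := by
    simpa [f] using sum_X_mul_mem_boundedForms hF
  have hdesc (n : ℕ) (hn : r ≤ n) :
      boundedRelations g r (n + 1) ≤ varSpan R s s * boundedRelations g r n :=
    boundedRelations_succ_le hr hn (map_aeval_boundedForms hf hfg) fun j l _ ↦
      mem_prefixSpan_mul_pow_of_mul_mem hxI hreg hξ hgrreg j l
  have hres := presKerLe_le_ker_map_residue <|
    map_residue_eq_zero_of_mem_boundedRelations hr (fun n hn ↦ hred.2 hn) hf hfg hdesc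
  have hle := presKer_le_span_sup_presKerLe hf hfg hdesc
  have hfker : f ∈ presKer g :=
    (mem_presKer_iff_of_isHomogeneous (isHomogeneous_of_X_pow_sub_mem hf)).2 hfg
  have hspan := fiberKer_eq_span_singleton hfker hle hres
  refine ⟨⟨fun i ↦ map (IsLocalRing.residue R) (F i), fun i ↦ (hF i).map _, ?_⟩,
    isLeast_fiberKer (X_pow_sub_map_mem_boundedForms _ hf) hspan,
    isLeast_presKer hf hfker hle hres⟩
  simpa [f] using hspan

/-- Heinzer–Kim type result: under the hypotheses of Theorem A, the fiber cone
`F(I)` is presented over `k = R/m` by the single equation `Y^{r+1} − ∑ Xᵢ Fᵢ`,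
i.e. `F(I) ≅ k[X₁,…,Xₛ,Y]/(Y^{r+1} − ∑ Xᵢ Fᵢ)`; in particular
`rt(F(I)) = r_J(I) + 1 = rt(I)`. -/
theorem statement6 {R : Type*} [CommRing R] [IsNoetherianRing R] [IsLocalRing R]
    (hk : Infinite (IsLocalRing.ResidueField R))
    (I : Ideal R) {s : ℕ} (x : Fin s → R) (y : R) (r : ℕ)
    (J : Ideal R) (hJ : J = Ideal.span (Set.range x))
    (hgen : I = Ideal.span (Set.range (Fin.snoc x y)))
    (hmin : ∀ i : Fin (s + 1), I ≠ Ideal.span (Fin.snoc x y '' {j | j ≠ i}))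
    (hred : IsLeast {k : ℕ | I ^ (k + 1) = J * I ^ k} r)
    (hreg : RingTheory.Sequence.IsRegular R (List.ofFn x))
    (ξ : Fin s → reesAlgebra I)
    (hξ : ∀ i, (ξ i : Polynomial R) = Polynomial.C (x i) * Polynomial.X)
    (hgrreg : RingTheory.Sequence.IsRegular (GrRing I)
      ((List.ofFn fun i => Ideal.Quotient.mk (grIdeal I) (ξ i)).take (s - 1))) :
    (∃ F : Fin s → MvPolynomial (Fin (s + 1)) (IsLocalRing.ResidueField R),
      (∀ i, (F i).IsHomogeneous r) ∧
      fiberKer (Fin.snoc x y)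
        = Ideal.span {X (Fin.last s) ^ (r + 1) - ∑ i, X i.castSucc * F i}) ∧
    IsLeast {N : ℕ | 1 ≤ N ∧ fiberKer (Fin.snoc x y) = fiberKerLe (Fin.snoc x y) N} (r + 1) ∧
    IsLeast {N : ℕ | 1 ≤ N ∧ presKer (Fin.snoc x y) = presKerLe (Fin.snoc x y) N} (r + 1) := by
  refine statement6_general I x y r J hJ hgen ?_ hred hreg.toIsWeaklyRegular ξ hξ
    hgrreg.toIsWeaklyRegular
  exact hJ ▸ notMem_span_range_of_span_snoc_ne (hgen.symm.trans_ne (hmin (Fin.last s)))
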